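/- arXiv:2307.01156 — 2 statements merged into one kernel-verified Lean document; each statement's English description precedes it below -/
import Mathlib

section
/- Let (X,T) be a zero dimensional dynamical system, W ⊆ X a closed set, and (Qₙ)_{n≥0} a system of Kakutani–Rokhlin partitions for (X,T,W) with tops Wₙ satisfying ⋂_{n≥0} Wₙ = W. Let P be any finite partition of X into clopen sets and let Z be any clopen set with W ⊆ Z. Then there exists n such that Qₙ refines P (every element of Qₙ is contained in some element of P) and Wₙ ⊆ Z. -/
/-- A Kakutani–Rokhlin partition for `(X,T)`: a finite family
`{Z(k,j) : 1 ≤ k ≤ K, 1 ≤ j ≤ J(k)}` of pairwise disjoint clopen sets covering `X`, with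
`T(Z(k,j)) = Z(k,j+1)` for `1 ≤ j < J(k)` and `T` mapping the top onto the base. -/
structure KRPartition (X : Type*) [TopologicalSpace X] (T : X ≃ₜ X) where
  K : ℕ
  K_pos : 1 ≤ K
  J : ℕ → ℕ
  J_pos : ∀ k ∈ Set.Icc 1 K, 1 ≤ J k
  Z : ℕ → ℕ → Set X
  clopen : ∀ k ∈ Set.Icc 1 K, ∀ j ∈ Set.Icc 1 (J k), IsClopen (Z k j)
  disj : ∀ k ∈ Set.Icc 1 K, ∀ j ∈ Set.Icc 1 (J k), ∀ k' ∈ Set.Icc 1 K,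
    ∀ j' ∈ Set.Icc 1 (J k'), (k, j) ≠ (k', j') → Disjoint (Z k j) (Z k' j')
  cover : (⋃ k ∈ Set.Icc 1 K, ⋃ j ∈ Set.Icc 1 (J k), Z k j) = Set.univ
  tower : ∀ k ∈ Set.Icc 1 K, ∀ j, 1 ≤ j → j < J k → ⇑T '' Z k j = Z k (j + 1)
  top_to_base : ⇑T '' (⋃ k ∈ Set.Icc 1 K, Z k (J k)) = ⋃ k ∈ Set.Icc 1 K, Z k 1

/-- The top `⋃_{k=1}^{K} Z(k,J(k))` of a K-R partition. -/
def KRPartition.top {X : Type*} [TopologicalSpace X] {T : X ≃ₜ X}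
    (P : KRPartition X T) : Set X :=
  ⋃ k ∈ Set.Icc 1 P.K, P.Z k (P.J k)

/-- The collection of elements (clopen pieces) of a K-R partition. -/
def KRPartition.parts {X : Type*} [TopologicalSpace X] {T : X ≃ₜ X}
    (P : KRPartition X T) : Set (Set X) :=
  {S | ∃ k ∈ Set.Icc 1 P.K, ∃ j ∈ Set.Icc 1 (P.J k), S = P.Z k j}

/-- A system of K-R partitions for `(X,T,W)`: a sequence of K-R partitions, each with
`W` contained in its top, each refining the previous one, with decreasing tops, and whose
union of elements is a basis for the topology of `X`. -/
structure KRSystem (X : Type*) [TopologicalSpace X] (T : X ≃ₜ X) (W : Set X) where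
  P : ℕ → KRPartition X T
  W_subset_top : ∀ n, W ⊆ (P n).top
  refines : ∀ n, ∀ S ∈ (P (n + 1)).parts, ∃ S' ∈ (P n).parts, S ⊆ S'
  top_mono : ∀ n, (P (n + 1)).top ⊆ (P n).top
  isBasis : TopologicalSpace.IsTopologicalBasis (⋃ n, (P n).parts)


theorem KRPartition.parts_open {X : Type*} [TopologicalSpace X] {T : X ≃ₜ X}
    (P : KRPartition X T) {S : Set X} (hS : S ∈ P.parts) : IsOpen S := by
  obtain ⟨k, hk, j, hj, rfl⟩ := hS
  exact (P.clopen k hk j hj).isOpen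

theorem KRPartition.exists_part {X : Type*} [TopologicalSpace X] {T : X ≃ₜ X}
    (P : KRPartition X T) (x : X) : ∃ S ∈ P.parts, x ∈ S := by
  have hx : x ∈ (⋃ k ∈ Set.Icc 1 P.K, ⋃ j ∈ Set.Icc 1 (P.J k), P.Z k j) := by
    rw [P.cover]; trivial
  simp only [Set.mem_iUnion] at hx
  obtain ⟨k, hk, j, hj, hx⟩ := hx
  exact ⟨_, ⟨k, hk, j, hj, rfl⟩, hx⟩

theorem KRPartition.parts_eq {X : Type*} [TopologicalSpace X] {T : X ≃ₜ X}
    (P : KRPartition X T) {S S' : Set X} (hS : S ∈ P.parts) (hS' : S' ∈ P.parts)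
    {x : X} (hx : x ∈ S) (hx' : x ∈ S') : S = S' := by
  obtain ⟨k, hk, j, hj, rfl⟩ := hS
  obtain ⟨k', hk', j', hj', rfl⟩ := hS'
  by_cases h : (k, j) = (k', j')
  · obtain ⟨rfl, rfl⟩ := Prod.mk.inj h
    rfl
  · exact absurd hx' (Set.disjoint_left.mp (P.disj k hk j hj k' hk' j' hj' h) hx)

theorem KRPartition.top_closed {X : Type*} [TopologicalSpace X] {T : X ≃ₜ X}
    (P : KRPartition X T) : IsClosed P.top :=
  (Set.finite_Icc 1 P.K).isClosed_biUnion fun k hk =>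
    (P.clopen k hk (P.J k) ⟨P.J_pos k hk, le_refl _⟩).isClosed

/-- Let `(X,T)` be a zero dimensional dynamical system, `W ⊆ X` closed, and `(Qₙ)` a system
of K-R partitions for `(X,T,W)` whose tops `Wₙ` satisfy `⋂ₙ Wₙ = W`. For any finite clopen
partition `P` of `X` and any clopen `Z ⊇ W` there is `n` such that `Qₙ` refines `P` and the
top of `Qₙ` is contained in `Z`. -/
theorem stmt6 {X : Type*} [TopologicalSpace X] [CompactSpace X]
    [TopologicalSpace.MetrizableSpace X] [TotallyDisconnectedSpace X] [Nonempty X]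
    (T : X ≃ₜ X) (W : Set X) (hWcl : IsClosed W)
    (Q : KRSystem X T W) (hQtop : (⋂ n, (Q.P n).top) = W)
    (P : Finset (Set X)) (hPclopen : ∀ S ∈ P, IsClopen S)
    (hPdisj : ∀ S ∈ P, ∀ S' ∈ P, S ≠ S' → Disjoint S S')
    (hPcover : ⋃₀ (P : Set (Set X)) = Set.univ)
    (Z : Set X) (hZ : IsClopen Z) (hWZ : W ⊆ Z) :
    ∃ n, (∀ S ∈ (Q.P n).parts, ∃ S' ∈ P, S ⊆ S') ∧ (Q.P n).top ⊆ Z := by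
  obtain ⟨x0⟩ := ‹Nonempty X›
  let G : ℕ → Set X := fun n => ⋃₀ {S | S ∈ (Q.P n).parts ∧ ∃ S' ∈ P, S ⊆ S'}
  have hGo : ∀ n, IsOpen (G n) := fun n =>
    isOpen_sUnion fun S hS => (Q.P n).parts_open hS.1
  have hGm : Monotone G := by
    refine monotone_nat_of_le_succ fun n => ?_
    rintro x ⟨S, ⟨hS, S', hS', hSS'⟩, hx⟩
    obtain ⟨S1, hS1, hx1⟩ := (Q.P (n + 1)).exists_part x
    obtain ⟨S2, hS2, h12⟩ := Q.refines n S1 hS1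
    have h := (Q.P n).parts_eq hS hS2 hx (h12 hx1)
    subst h
    exact ⟨S1, ⟨hS1, S', hS', h12.trans hSS'⟩, hx1⟩
  have hTm : Antitone fun n => (Q.P n).top := antitone_nat_of_succ_le Q.top_mono
  let H : ℕ → Set X := fun n => G n ∩ ((Q.P n).topᶜ ∪ Z)
  have hHo : ∀ n, IsOpen (H n) := fun n =>
    (hGo n).inter ((Q.P n).top_closed.isOpen_compl.union hZ.isOpen)
  have hHm : Monotone H := fun m n h =>
    Set.inter_subset_inter (hGm h)
      (Set.union_subset_union_left _ (Set.compl_subset_compl.mpr (hTm h)))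
  have hP : ∀ x : X, ∃ S ∈ P, x ∈ S := by
    intro x
    have hx : x ∈ ⋃₀ (P : Set (Set X)) := by rw [hPcover]; trivial
    obtain ⟨S, hS, hx⟩ := hx
    exact ⟨S, hS, hx⟩
  have hcov : (Set.univ : Set X) ⊆ ⋃ n, H n := by
    intro x _
    obtain ⟨S', hS', hx⟩ := hP x
    obtain ⟨S, hS, hxS, hSS⟩ :=
      Q.isBasis.exists_subset_of_mem_open hx (hPclopen S' hS').isOpen
    obtain ⟨n, hn⟩ := Set.mem_iUnion.mp hS
    have hxG : x ∈ G n := ⟨S, ⟨hn, S', hS', hSS⟩, hxS⟩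
    by_cases hxZ : x ∈ Z
    · exact Set.mem_iUnion.mpr ⟨n, hxG, Or.inr hxZ⟩
    · have hxW : x ∉ ⋂ n, (Q.P n).top := by
        rw [hQtop]; exact fun h => hxZ (hWZ h)
      simp only [Set.mem_iInter, not_forall] at hxW
      obtain ⟨m, hm⟩ := hxW
      exact Set.mem_iUnion.mpr ⟨max n m, hGm (le_max_left n m) hxG,
        Or.inl fun h => hm (hTm (le_max_right n m) h)⟩
  obtain ⟨n, hn⟩ := isCompact_univ.elim_directed_cover H hHo hcov hHm.directed_le
  refine ⟨n, fun S hS => ?_, fun x hx => ?_⟩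
  · rcases S.eq_empty_or_nonempty with rfl | ⟨x, hx⟩
    · obtain ⟨S', hS', _⟩ := hP x0
      exact ⟨S', hS', Set.empty_subset _⟩
    · obtain ⟨S1, ⟨hS1, S', hS', h⟩, hx1⟩ := (hn (Set.mem_univ x)).1
      rw [(Q.P n).parts_eq hS hS1 hx hx1]
      exact ⟨S', hS', h⟩
  · exact (hn (Set.mem_univ x)).2.resolve_left fun h => h hx
end

section
/- Let (X,T) be a zero dimensional dynamical system, W ⊆ X a closed set, and let (Pₙ)_{n≥0} and (Qₙ)_{n≥0} be two systems of Kakutani–Rokhlin partitions for (X,T,W), with tops Zₙ and Wₙ respectively, such that ⋂_{n≥0} Zₙ = W = ⋂_{n≥0} Wₙ. Then there exists a strictly increasing sequence of indices n₁ < n₂ < n₃ < ⋯ such that Q_{n₂} refines P_{n₁}, P_{n₃} refines Q_{n₂}, Q_{n₄} refines P_{n₃}, and so on alternately, and the corresponding tops are nested: Z_{n₁} ⊇ W_{n₂} ⊇ Z_{n₃} ⊇ W_{n₄} ⊇ ⋯ (here a partition R refines a partition R' if every element of R is contained in some element of R'). -/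
theorem kr_parts_mem {X : Type*} [TopologicalSpace X] {T : X ≃ₜ X}
    (R : KRPartition X T) (x : X) : ∃ S ∈ R.parts, x ∈ S := by
  have h : x ∈ (⋃ k ∈ Set.Icc 1 R.K, ⋃ j ∈ Set.Icc 1 (R.J k), R.Z k j) := by
    rw [R.cover]; trivial
  simp only [Set.mem_iUnion] at h
  obtain ⟨k, hk, j, hj, hx⟩ := h
  exact ⟨_, ⟨k, hk, j, hj, rfl⟩, hx⟩

theorem kr_parts_clopen {X : Type*} [TopologicalSpace X] {T : X ≃ₜ X}
    (R : KRPartition X T) {S : Set X} (hS : S ∈ R.parts) : IsClopen S := by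
  obtain ⟨k, hk, j, hj, rfl⟩ := hS
  exact R.clopen k hk j hj

theorem kr_parts_eq {X : Type*} [TopologicalSpace X] {T : X ≃ₜ X}
    (R : KRPartition X T) {S S' : Set X} (hS : S ∈ R.parts) (hS' : S' ∈ R.parts) {x : X}
    (hx : x ∈ S) (hx' : x ∈ S') : S = S' := by
  obtain ⟨k, hk, j, hj, rfl⟩ := hS
  obtain ⟨k', hk', j', hj', rfl⟩ := hS'
  by_cases h : (k, j) = (k', j')
  · obtain ⟨rfl, rfl⟩ := Prod.mk.inj h
    rfl
  · exact (Set.disjoint_left.1 (R.disj k hk j hj k' hk' j' hj' h) hx hx').elim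

theorem kr_top_clopen {X : Type*} [TopologicalSpace X] {T : X ≃ₜ X}
    (R : KRPartition X T) : IsClopen R.top := by
  unfold KRPartition.top
  exact (Set.finite_Icc 1 R.K).isClopen_biUnion fun k hk =>
    R.clopen k hk _ ⟨R.J_pos k hk, le_rfl⟩

theorem kr_refines_le {X : Type*} [TopologicalSpace X] {T : X ≃ₜ X} {W : Set X}
    (Q : KRSystem X T W) {n m : ℕ} (h : n ≤ m) :
    ∀ S ∈ (Q.P m).parts, ∃ S' ∈ (Q.P n).parts, S ⊆ S' := by
  induction m, h using Nat.le_induction with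
  | base => exact fun S hS => ⟨S, hS, subset_rfl⟩
  | succ m _ ih =>
    intro S hS
    obtain ⟨S1, h1, h1'⟩ := Q.refines m S hS
    obtain ⟨S2, h2, h2'⟩ := ih S1 h1
    exact ⟨S2, h2, h1'.trans h2'⟩

theorem kr_eventually_refines {X : Type*} [TopologicalSpace X] [CompactSpace X]
    {T : X ≃ₜ X} {W : Set X} (Q : KRSystem X T W) (R : KRPartition X T) :
    ∃ N, ∀ m ≥ N, ∀ S ∈ (Q.P m).parts, ∃ S' ∈ R.parts, S ⊆ S' := by
  have key : ∃ N, ∀ m ≥ N, ∀ S ∈ (Q.P m).parts, (S ∩ Set.univ).Nonempty →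
      ∃ S' ∈ R.parts, S ⊆ S' := by
    refine isCompact_univ.induction_on (p := fun A => ∃ N, ∀ m ≥ N, ∀ S ∈ (Q.P m).parts,
      (S ∩ A).Nonempty → ∃ S' ∈ R.parts, S ⊆ S') ?_ ?_ ?_ ?_
    · exact ⟨0, fun m _ S _ h => by simp at h⟩
    · rintro s t hst ⟨N, hN⟩
      exact ⟨N, fun m hm S hS h => hN m hm S hS (h.mono (Set.inter_subset_inter_right _ hst))⟩
    · rintro s t ⟨N, hN⟩ ⟨M, hM⟩
      refine ⟨max N M, fun m hm S hS h => ?_⟩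
      rw [Set.inter_union_distrib_left] at h
      rcases Set.union_nonempty.1 h with h | h
      · exact hN m (le_trans (le_max_left _ _) hm) S hS h
      · exact hM m (le_trans (le_max_right _ _) hm) S hS h
    · intro x _
      obtain ⟨U, hU, hxU⟩ := kr_parts_mem R x
      obtain ⟨V, hV, hxV, hVU⟩ := Q.isBasis.exists_subset_of_mem_open hxU
        (kr_parts_clopen R hU).isOpen
      obtain ⟨n, hn⟩ := Set.mem_iUnion.1 hV
      refine ⟨V, mem_nhdsWithin_of_mem_nhds
        ((kr_parts_clopen _ hn).isOpen.mem_nhds hxV), n, ?_⟩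
      rintro m hm S hS ⟨y, hyS, hyV⟩
      obtain ⟨S', hS', hSS'⟩ := kr_refines_le Q hm S hS
      have := kr_parts_eq _ hS' hn (hSS' hyS) hyV
      subst this
      exact ⟨U, hU, hSS'.trans hVU⟩
  obtain ⟨N, hN⟩ := key
  refine ⟨N, fun m hm S hS => ?_⟩
  rcases S.eq_empty_or_nonempty with rfl | h
  · have h1 : 1 ∈ Set.Icc 1 R.K := ⟨le_rfl, R.K_pos⟩
    exact ⟨_, ⟨1, h1, 1, ⟨le_rfl, R.J_pos 1 h1⟩, rfl⟩, Set.empty_subset _⟩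
  · exact hN m hm S hS (by simpa using h)

theorem kr_eventually_top {X : Type*} [TopologicalSpace X] [CompactSpace X]
    {T : X ≃ₜ X} {W : Set X} (Q : KRSystem X T W) (hQ : (⋂ n, (Q.P n).top) = W)
    (R : KRPartition X T) (hR : W ⊆ R.top) :
    ∃ N, ∀ m ≥ N, (Q.P m).top ⊆ R.top := by
  have hanti : Antitone fun n => (Q.P n).top := antitone_nat_of_succ_le Q.top_mono
  obtain ⟨N, hN⟩ := exists_subset_nhds_of_isCompact' (V := fun n => (Q.P n).top)
    hanti.directed_ge (fun n => (kr_top_clopen _).isClosed.isCompact)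
    (fun n => (kr_top_clopen _).isClosed) (U := R.top)
    (fun x hx => (kr_top_clopen R).isOpen.mem_nhds (hR (hQ ▸ hx)))
  exact ⟨N, fun m hm => (hanti hm).trans hN⟩

theorem kr_step {X : Type*} [TopologicalSpace X] [CompactSpace X]
    {T : X ≃ₜ X} {W : Set X} (Q : KRSystem X T W) (hQ : (⋂ n, (Q.P n).top) = W)
    (R : KRPartition X T) (hR : W ⊆ R.top) :
    ∃ N, ∀ m ≥ N, (∀ S ∈ (Q.P m).parts, ∃ S' ∈ R.parts, S ⊆ S') ∧ (Q.P m).top ⊆ R.top := by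
  obtain ⟨N, hN⟩ := kr_eventually_refines Q R
  obtain ⟨M, hM⟩ := kr_eventually_top Q hQ R hR
  exact ⟨max N M, fun m hm => ⟨hN m (le_trans (le_max_left _ _) hm),
    hM m (le_trans (le_max_right _ _) hm)⟩⟩

/-- Given two systems of K-R partitions `(Pₙ)` and `(Qₙ)` for `(X,T,W)` whose tops
intersect exactly in `W`, there is a strictly increasing sequence of indices
`n₁ < n₂ < n₃ < ⋯` such that, alternately, `Q_{n_{i+1}}` refines `P_{n_i}` (for odd `i`)
and `P_{n_{i+1}}` refines `Q_{n_i}` (for even `i`), with correspondingly nested tops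
`Z_{n₁} ⊇ W_{n₂} ⊇ Z_{n₃} ⊇ W_{n₄} ⊇ ⋯`. -/
theorem stmt7 {X : Type*} [TopologicalSpace X] [CompactSpace X]
    [TopologicalSpace.MetrizableSpace X] [TotallyDisconnectedSpace X] [Nonempty X]
    (T : X ≃ₜ X) (W : Set X) (hWcl : IsClosed W)
    (P Q : KRSystem X T W)
    (hPtop : (⋂ n, (P.P n).top) = W) (hQtop : (⋂ n, (Q.P n).top) = W) :
    ∃ n : ℕ → ℕ, StrictMono n ∧
      (∀ i, 1 ≤ i → Odd i →
        (∀ S ∈ (Q.P (n (i + 1))).parts, ∃ S' ∈ (P.P (n i)).parts, S ⊆ S') ∧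
        (Q.P (n (i + 1))).top ⊆ (P.P (n i)).top) ∧
      (∀ i, 1 ≤ i → Even i →
        (∀ S ∈ (P.P (n (i + 1))).parts, ∃ S' ∈ (Q.P (n i)).parts, S ⊆ S') ∧
        (P.P (n (i + 1))).top ⊆ (Q.P (n i)).top) := by
  choose f hf using fun n => kr_step Q hQtop (P.P n) (P.W_subset_top n)
  choose g hg using fun n => kr_step P hPtop (Q.P n) (Q.W_subset_top n)
  let n : ℕ → ℕ := fun i => Nat.rec 0 (fun _ a => (a + 1) + f a + g a) i
  have hn : ∀ i, n (i + 1) = (n i + 1) + f (n i) + g (n i) := fun i => rfl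
  refine ⟨n, strictMono_nat_of_lt_succ fun i => ?_, fun i _ _ => ?_, fun i _ _ => ?_⟩
  · rw [hn]; omega
  · exact hf (n i) _ (by rw [hn]; omega)
  · exact hg (n i) _ (by rw [hn]; omega)
end
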